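/- arXiv:2102.06275 — 3 statements merged into one kernel-verified Lean document; each statement's English description precedes it below -/
import Mathlib

section
/- Let F : 𝓛 ⥤ 𝓜 be a discrete opfibration between inverse categories and X : 𝓜 ⥤ Type a functor. Then for every object K of 𝓛 there is a bijection between the matching object M_K(F ⋙ X) of the composite diagram and the matching object M_{F K} X, and this bijection commutes with the matching maps out of (F ⋙ X)(K) = X(F K). -/
open CategoryTheory

universe w v u v₂ u₂ v₃ u₃

/-- An inverse category: a category equipped with a rank function such that every
morphism weakly decreases rank, and only identities preserve rank. -/
structure InverseRank (C : Type u) [Category.{v} C] where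
  rk : C → ℕ
  rk_le : ∀ {K L : C} (f : K ⟶ L), rk L ≤ rk K
  rk_id : ∀ {K L : C} (f : K ⟶ L), rk L = rk K → ∃ h : K = L, f = eqToHom h

/-- An inverse category has height `p` if every object has rank `< p`. -/
def InverseRank.HasHeight {C : Type u} [Category.{v} C] (r : InverseRank C) (p : ℕ) : Prop :=
  ∀ K : C, r.rk K < p

section

variable {C : Type u} [Category.{v} C]

/-- The objects of rank `m`. -/
abbrev RankObj (rk : C → ℕ) (m : ℕ) : Type u := {L : C // rk L = m}

/-- The fanout of `K` at `m`: pairs `(L, f)` with `L` of rank `m` and `f : K ⟶ L`. -/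
abbrev Fanout (rk : C → ℕ) (K : C) (m : ℕ) : Type max u v :=
  Σ L : RankObj rk m, (K ⟶ L.1)

/-- An object of the derivative `∂_M 𝓛`: a pair `(K, α)` with `K` of positive rank
(i.e. of rank `n + 1` for some `n`) and `α` a section of `M` over the fanout of `K`
at `0`. -/
structure DerivObj (rk : C → ℕ) (M : RankObj rk 0 → Type w) : Type max u v w where
  pt : C
  pos : 0 < rk pt
  sec : ∀ F : Fanout rk pt 0, M F.1

/-- The derivative category `∂_M 𝓛`: a morphism `(K₁, α₁) ⟶ (K₂, α₂)` is a morphism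
`f : K₁ ⟶ K₂` of `𝓛` such that `α₁ (L, f ≫ g) = α₂ (L, g)` for every `(L, g)` in the
fanout of `K₂` at `0`. -/
instance derivCategory (rk : C → ℕ) (M : RankObj rk 0 → Type w) :
    Category (DerivObj rk M) where
  Hom A B := {f : A.pt ⟶ B.pt // ∀ F : Fanout rk B.pt 0, A.sec ⟨F.1, f ≫ F.2⟩ = B.sec F}
  id A := ⟨𝟙 A.pt, fun F => by rw [Category.id_comp]⟩
  comp {A B Z} f g := ⟨f.1 ≫ g.1, fun F => by
    rw [Category.assoc]
    exact (f.2 ⟨F.1, g.1 ≫ F.2⟩).trans (g.2 F)⟩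
  id_comp f := Subtype.ext (Category.id_comp f.1)
  comp_id f := Subtype.ext (Category.comp_id f.1)
  assoc f g h := Subtype.ext (Category.assoc f.1 g.1 h.1)

/-- The rank function of the derivative category: `rk (K, α) := rk K - 1`. -/
abbrev derivRk (rk : C → ℕ) (M : RankObj rk 0 → Type w) : DerivObj rk M → ℕ :=
  fun A => rk A.pt - 1

end

section

variable {C : Type u} [Category.{v} C]

/-- The matching object `M_K X` of a diagram `X : 𝓛 ⥤ Type` at `K`: compatible
families `d` assigning to each `(L, f)` with `rk L < rk K` an element of `X L`. -/
structure MatchingObj (rk : C → ℕ) (X : C ⥤ Type w) (K : C) : Type max u v w where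
  d : ∀ (L : C), rk L < rk K → (K ⟶ L) → X.obj L
  compat : ∀ {L₁ L₂ : C} (h₁ : rk L₁ < rk K) (h₂ : rk L₂ < rk K) (g : L₁ ⟶ L₂),
    rk L₂ < rk L₁ → ∀ f₁ : K ⟶ L₁, X.map g (d L₁ h₁ f₁) = d L₂ h₂ (f₁ ≫ g)

/-- The matching map `X K → M_K X`, sending `x` to the family `(L, f) ↦ X(f)(x)`. -/
def matchMap (rk : C → ℕ) (X : C ⥤ Type w) (K : C) (x : X.obj K) : MatchingObj rk X K where
  d L _ f := X.map f x
  compat h₁ h₂ g hg f₁ := (FunctorToTypes.map_comp_apply X f₁ g x).symm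

/-- The restriction `X₀` of a diagram `X : 𝓛 ⥤ Type` to the rank-`0` objects. -/
def diagRestrict (rk : C → ℕ) (X : C ⥤ Type w) : RankObj rk 0 → Type w :=
  fun L => X.obj L.1

/-- The induced diagram `∂X : ∂_{X₀}𝓛 ⥤ Type` on the derivative:
`∂X (K, α) := { x : X K | X(f)(x) = α (L, f) for all (L, f) in the fanout of K at 0 }`. -/
def derivDiag (rk : C → ℕ) (X : C ⥤ Type w) :
    DerivObj rk (diagRestrict rk X) ⥤ Type w where
  obj A := {x : X.obj A.pt // ∀ F : Fanout rk A.pt 0, X.map F.2 x = A.sec F}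
  map {A B} f := TypeCat.ofHom fun x => ⟨X.map f.1 x.1, fun F => by
    rw [← FunctorToTypes.map_comp_apply]
    exact (x.2 ⟨F.1, f.1 ≫ F.2⟩).trans (f.2 F)⟩
  map_id A := by
    refine ConcreteCategory.hom_ext _ _ fun x => ?_
    exact Subtype.ext (FunctorToTypes.map_id_apply X x.1)
  map_comp {A B Z} f g := by
    refine ConcreteCategory.hom_ext _ _ fun x => ?_
    exact Subtype.ext (FunctorToTypes.map_comp_apply X f.1 g.1 x.1)

end

section

variable {C : Type u} [Category.{v} C] {D : Type u₂} [Category.{v₂} D]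
  {E : Type u₃} [Category.{v₃} E]

/-- A functor between inverse categories is rank-preserving if `rk (F K) = rk K`. -/
def RankPres (F : C ⥤ D) (rkC : C → ℕ) (rkD : D → ℕ) : Prop :=
  ∀ K : C, rkD (F.obj K) = rkC K

/-- The induced map on fanouts of a rank-preserving functor, sending `(L, f)` to
`(F L, F f)`. -/
def fanoutMap (F : C ⥤ D) {rkC : C → ℕ} {rkD : D → ℕ} (hF : RankPres F rkC rkD)
    (K : C) (m : ℕ) : Fanout rkC K m → Fanout rkD (F.obj K) m :=
  fun G => ⟨⟨F.obj G.1.1, (hF G.1.1).trans G.1.2⟩, F.map G.2⟩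

/-- A rank-preserving functor is a discrete opfibration if all its induced maps on
fanouts (at `m < rk K`) are bijections. -/
structure IsDiscOpfib (F : C ⥤ D) (rkC : C → ℕ) (rkD : D → ℕ) : Prop where
  pres : RankPres F rkC rkD
  bij : ∀ (K : C) (m : ℕ), m < rkC K → Function.Bijective (fanoutMap F pres K m)

/-- The fanout bijection of a discrete opfibration, as an equivalence. -/
noncomputable def fanoutEquiv (F : C ⥤ D) {rkC : C → ℕ} {rkD : D → ℕ}
    (hF : IsDiscOpfib F rkC rkD) (K : C) (m : ℕ) (hm : m < rkC K) :
    Fanout rkC K m ≃ Fanout rkD (F.obj K) m :=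
  Equiv.ofBijective _ (hF.bij K m hm)

theorem isDiscOpfib_id (rk : C → ℕ) : IsDiscOpfib (𝟭 C) rk rk := by
  refine ⟨fun _ => rfl, fun K m hm => ?_⟩
  exact Function.bijective_id

theorem isDiscOpfib_comp {F : C ⥤ D} {G : D ⥤ E} {rkC : C → ℕ} {rkD : D → ℕ}
    {rkE : E → ℕ} (hF : IsDiscOpfib F rkC rkD) (hG : IsDiscOpfib G rkD rkE) :
    IsDiscOpfib (F ⋙ G) rkC rkE := by
  refine ⟨fun K => (hG.pres (F.obj K)).trans (hF.pres K), fun K m hm => ?_⟩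
  exact (hG.bij (F.obj K) m (by rw [hF.pres]; exact hm)).comp (hF.bij K m hm)

end

/-! A discrete opfibration `F` identifies the arrows `f : K ⟶ L` with `rk L < rk K` with the
rank-decreasing arrows out of `F K`, via `f ↦ F f`. Hence a matching family on `K` transports to a
family on `F K`. For the compatibility of the transported family at an arrow `g` out of the target
of `F f`, one needs `g` itself to lie in the image of `F`, which is the opfibration property at `L`
rather than at `K`. -/

section ProperFanout

variable {C : Type u} [Category.{v} C] {D : Type u₂} [Category.{v₂} D]
  {rkC : C → ℕ} {rkD : D → ℕ} {F : C ⥤ D}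

/-- The proper fanout of `K`: the union of its fanouts at all `m < rk K`. The rank of the target
is bounded rather than recorded, so that no casts between ranks occur. -/
abbrev ProperFanout (rk : C → ℕ) (K : C) : Type max u v :=
  Σ L : {L : C // rk L < rk K}, (K ⟶ L.1)

/-- The decomposition of the proper fanout by the rank of the target. -/
def ProperFanout.equivSigmaFanout (rk : C → ℕ) (K : C) :
    ProperFanout rk K ≃ Σ m : Set.Iio (rk K), Fanout rk K m where
  toFun p := ⟨⟨rk p.1, p.1.2⟩, ⟨p.1, rfl⟩, p.2⟩
  invFun q := ⟨⟨q.2.1, q.2.1.2.trans_lt q.1.2⟩, q.2.2⟩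
  left_inv _ := rfl
  right_inv := by
    rintro ⟨⟨m, _⟩, ⟨L, hL⟩, f⟩
    change rk L = m at hL
    subst hL
    rfl

theorem RankPres.obj_lt_obj_iff (hF : RankPres F rkC rkD) {K L : C} :
    rkD (F.obj L) < rkD (F.obj K) ↔ rkC L < rkC K := by
  rw [hF, hF]

/-- The map on proper fanouts induced by a rank-preserving functor, the analogue of `fanoutMap`
for all ranks below that of `K` at once. -/
def properFanoutMap (hF : RankPres F rkC rkD) (K : C) :
    ProperFanout rkC K → ProperFanout rkD (F.obj K) :=
  fun p => ⟨⟨F.obj p.1, hF.obj_lt_obj_iff.2 p.1.2⟩, F.map p.2⟩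

namespace IsDiscOpfib

theorem properFanoutMap_bijective (hF : IsDiscOpfib F rkC rkD) (K : C) :
    Function.Bijective (properFanoutMap hF.pres K) := by
  let ranks : Set.Iio (rkC K) ≃ Set.Iio (rkD (F.obj K)) :=
    Equiv.setCongr (congrArg Set.Iio (hF.pres K).symm)
  let fanouts : (Σ m : Set.Iio (rkC K), Fanout rkC K m) ≃
      Σ m : Set.Iio (rkD (F.obj K)), Fanout rkD (F.obj K) m :=
    ranks.sigmaCongr fun m => fanoutEquiv F hF K m m.2
  let e : ProperFanout rkC K ≃ ProperFanout rkD (F.obj K) :=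
    (ProperFanout.equivSigmaFanout rkC K).trans
      (fanouts.trans (ProperFanout.equivSigmaFanout rkD (F.obj K)).symm)
  have map_eq : properFanoutMap hF.pres K = e := rfl
  exact map_eq ▸ e.bijective

theorem hom_induction (hF : IsDiscOpfib F rkC rkD) {K : C}
    {P : ∀ L : D, rkD L < rkD (F.obj K) → (F.obj K ⟶ L) → Prop}
    (map : ∀ (L : C) (hL : rkC L < rkC K) (f : K ⟶ L),
      P (F.obj L) (hF.pres.obj_lt_obj_iff.2 hL) (F.map f))
    {L : D} (hL : rkD L < rkD (F.obj K)) (f : F.obj K ⟶ L) : P L hL f :=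
  (hF.properFanoutMap_bijective K).surjective.forall (p := fun p => P p.1 p.1.2 p.2) |>.2
    (fun p => map p.1 p.1.2 p.2) ⟨⟨L, hL⟩, f⟩

theorem hom_comp_induction (hF : IsDiscOpfib F rkC rkD) {K : C}
    {P : ∀ L M : D, rkD L < rkD (F.obj K) → rkD M < rkD L → (F.obj K ⟶ L) → (L ⟶ M) → Prop}
    (map : ∀ (L M : C) (hL : rkC L < rkC K) (hM : rkC M < rkC L) (f : K ⟶ L) (g : L ⟶ M),
      P (F.obj L) (F.obj M) (hF.pres.obj_lt_obj_iff.2 hL) (hF.pres.obj_lt_obj_iff.2 hM)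
        (F.map f) (F.map g))
    {L M : D} (hL : rkD L < rkD (F.obj K)) (hM : rkD M < rkD L) (f : F.obj K ⟶ L) (g : L ⟶ M) :
    P L M hL hM f g :=
  hF.hom_induction (P := fun L hL f => ∀ (M : D) (hM : rkD M < rkD L) (g : L ⟶ M),
      P L M hL hM f g)
    (fun L hL f _ hM g => hF.hom_induction
      (P := fun M hM g => P (F.obj L) M (hF.pres.obj_lt_obj_iff.2 hL) hM (F.map f) g)
      (fun M hM g => map L M hL hM f g) hM g)
    hL f M hM g

/-- Families indexed by the proper fanout of `K` correspond to families indexed by that of `F K`.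
This is the underlying bijection of the one between matching objects. -/
noncomputable def familyEquiv (hF : IsDiscOpfib F rkC rkD) (K : C) (A : D → Type w) :
    (∀ p : ProperFanout rkC K, A (F.obj p.1)) ≃ ∀ p : ProperFanout rkD (F.obj K), A p.1 :=
  Equiv.piCongrLeft (fun p => A p.1) (Equiv.ofBijective _ (hF.properFanoutMap_bijective K))

theorem familyEquiv_apply_map (hF : IsDiscOpfib F rkC rkD) {K : C} {A : D → Type w}
    (d : ∀ p : ProperFanout rkC K, A (F.obj p.1)) {L : C} (hL : rkC L < rkC K) (f : K ⟶ L) :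
    hF.familyEquiv K A d ⟨⟨F.obj L, hF.pres.obj_lt_obj_iff.2 hL⟩, F.map f⟩ = d ⟨⟨L, hL⟩, f⟩ :=
  Equiv.piCongrLeft_apply_apply (fun p => A p.1)
    (Equiv.ofBijective _ (hF.properFanoutMap_bijective K)) d ⟨⟨L, hL⟩, f⟩

end IsDiscOpfib

end ProperFanout

section MatchingObj

variable {C : Type u} [Category.{v} C] {D : Type u₂} [Category.{v₂} D]
  {rkC : C → ℕ} {rkD : D → ℕ} {F : C ⥤ D} {X : D ⥤ Type w} {K : C}

attribute [ext] MatchingObj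

namespace MatchingObj

/-- Restriction of a matching family along a rank-preserving functor. -/
def restrict (hF : RankPres F rkC rkD) (m : MatchingObj rkD X (F.obj K)) :
    MatchingObj rkC (F ⋙ X) K where
  d L hL f := m.d (F.obj L) (hF.obj_lt_obj_iff.2 hL) (F.map f)
  compat h₁ h₂ g hg f := by
    rw [F.map_comp]
    exact m.compat _ _ (F.map g) (hF.obj_lt_obj_iff.2 hg) (F.map f)

theorem restrict_matchMap (hF : RankPres F rkC rkD) (x : X.obj (F.obj K)) :
    (matchMap rkD X (F.obj K) x).restrict hF = matchMap rkC (F ⋙ X) K x :=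
  rfl

theorem restrict_injective (hF : IsDiscOpfib F rkC rkD) :
    Function.Injective (restrict (X := X) (K := K) hF.pres) := by
  intro a b hab
  ext L hL f
  refine hF.hom_induction (P := fun L hL f => a.d L hL f = b.d L hL f) (fun L hL f => ?_) hL f
  exact congrArg (fun m => m.d L hL f) hab

/-- Extension of a matching family along a discrete opfibration, inverse to `restrict`. -/
noncomputable def extend (hF : IsDiscOpfib F rkC rkD) (m : MatchingObj rkC (F ⋙ X) K) :
    MatchingObj rkD X (F.obj K) where
  d L hL f := hF.familyEquiv K X.obj (fun p => m.d p.1 p.1.2 p.2) ⟨⟨L, hL⟩, f⟩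
  compat h₁ _ g hg f := by
    let d := hF.familyEquiv K X.obj fun p => m.d p.1 p.1.2 p.2
    have d_map {L : C} (hL : rkC L < rkC K) (f : K ⟶ L) :
        d ⟨⟨F.obj L, hF.pres.obj_lt_obj_iff.2 hL⟩, F.map f⟩ = m.d L hL f :=
      hF.familyEquiv_apply_map _ hL f
    refine hF.hom_comp_induction (P := fun L M hL hM f g =>
      X.map g (d ⟨⟨L, hL⟩, f⟩) = d ⟨⟨M, hM.trans hL⟩, f ≫ g⟩) ?_ h₁ hg f g
    intro L M hL hM f g
    rw [← F.map_comp, d_map hL, d_map (hM.trans hL)]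
    exact m.compat hL (hM.trans hL) g hM f

theorem restrict_extend (hF : IsDiscOpfib F rkC rkD) (m : MatchingObj rkC (F ⋙ X) K) :
    (m.extend hF).restrict hF.pres = m := by
  ext L hL f
  exact hF.familyEquiv_apply_map _ hL f

theorem extend_restrict (hF : IsDiscOpfib F rkC rkD) (m : MatchingObj rkD X (F.obj K)) :
    (m.restrict hF.pres).extend hF = m :=
  restrict_injective hF (restrict_extend hF _)

end MatchingObj

/-- The bijection `M_K (F ⋙ X) ≃ M_{F K} X` induced by a discrete opfibration `F`, whose inverse
is restriction along `F`. -/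
noncomputable def IsDiscOpfib.matchingObjEquiv (hF : IsDiscOpfib F rkC rkD) (X : D ⥤ Type w)
    (K : C) : MatchingObj rkC (F ⋙ X) K ≃ MatchingObj rkD X (F.obj K) where
  toFun := MatchingObj.extend hF
  invFun := MatchingObj.restrict hF.pres
  left_inv := MatchingObj.restrict_extend hF
  right_inv := MatchingObj.extend_restrict hF

end MatchingObj

theorem matchingObj_equiv_of_discOpfib_general {C : Type u} [Category.{v} C] {D : Type u₂}
    [Category.{v₂} D] {rkC : C → ℕ} {rkD : D → ℕ} {F : C ⥤ D} (hF : IsDiscOpfib F rkC rkD)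
    (X : D ⥤ Type w) (K : C) :
    ∃ e : MatchingObj rkC (F ⋙ X) K ≃ MatchingObj rkD X (F.obj K),
      ∀ x : X.obj (F.obj K), e (matchMap rkC (F ⋙ X) K x) = matchMap rkD X (F.obj K) x := by
  refine ⟨hF.matchingObjEquiv X K, fun x => ?_⟩
  rw [← MatchingObj.restrict_matchMap hF.pres]
  exact MatchingObj.extend_restrict hF _

/-- Let `F : 𝓛 ⥤ 𝓜` be a discrete opfibration between inverse
categories and `X : 𝓜 ⥤ Type` a functor.  For every object `K` of `𝓛` there is a
bijection between the matching objects `M_K (F ⋙ X)` and `M_{F K} X`, commuting with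
the matching maps out of `(F ⋙ X) K = X (F K)`. -/
theorem matchingObj_equiv_of_discOpfib {C : Type u} [Category.{v} C] {D : Type u₂}
    [Category.{v₂} D] (r : InverseRank C) (s : InverseRank D) (F : C ⥤ D)
    (hF : IsDiscOpfib F r.rk s.rk) (X : D ⥤ Type w) (K : C) :
    ∃ e : MatchingObj r.rk (F ⋙ X) K ≃ MatchingObj s.rk X (F.obj K),
      ∀ x : X.obj (F.obj K),
        e (matchMap r.rk (F ⋙ X) K x) = matchMap s.rk X (F.obj K) x := by
  exact matchingObj_equiv_of_discOpfib_general hF X K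
end

section
/- Let H : 𝓛 ⥤ 𝓜 be a discrete opfibration between inverse categories of height p > 0, let L₀ and M₀ be families of types indexed by 𝓛(0) and 𝓜(0) respectively, and let h assign to each K in 𝓛(0) a function h_K : L₀ K → M₀(H K). Then the derived functor ∂_{H,h} : ∂_{L₀}𝓛 ⥤ ∂_{M₀}𝓜 is well defined and is a discrete opfibration. -/
open CategoryTheory

universe w v u v₂ u₂ v₃ u₃

theorem secHEq {α : Sort*} {P : α → Sort*} (s : ∀ a, P a) {a b : α} (h : a = b) :
    HEq (s a) (s b) := by rw [h]

section

variable {C : Type u} [Category.{v} C] {D : Type u₂} [Category.{v₂} D]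

/-- The section part of the object map of the derived functor `∂_{H,h}`:
`β F := h (α (H⁻¹ F))`, where `H⁻¹` is the inverse of the fanout bijection of `H`
at rank `0`. -/
noncomputable def derivedSec (H : C ⥤ D) {rkC : C → ℕ} {rkD : D → ℕ}
    (hH : IsDiscOpfib H rkC rkD)
    (L₀ : RankObj rkC 0 → Type w) (M₀ : RankObj rkD 0 → Type w)
    (h : ∀ K : RankObj rkC 0, L₀ K → M₀ ⟨H.obj K.1, (hH.pres K.1).trans K.2⟩)
    (A : DerivObj rkC L₀) : ∀ F : Fanout rkD (H.obj A.pt) 0, M₀ F.1 :=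
  Equiv.piCongrLeft (fun F : Fanout rkD (H.obj A.pt) 0 => M₀ F.1)
    (fanoutEquiv H hH A.pt 0 A.pos) (fun G => h G.1 (A.sec G))

theorem derivedSec_apply (H : C ⥤ D) {rkC : C → ℕ} {rkD : D → ℕ}
    (hH : IsDiscOpfib H rkC rkD)
    (L₀ : RankObj rkC 0 → Type w) (M₀ : RankObj rkD 0 → Type w)
    (h : ∀ K : RankObj rkC 0, L₀ K → M₀ ⟨H.obj K.1, (hH.pres K.1).trans K.2⟩)
    (A : DerivObj rkC L₀) (G : Fanout rkC A.pt 0) :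
    derivedSec H hH L₀ M₀ h A (fanoutEquiv H hH A.pt 0 A.pos G) = h G.1 (A.sec G) :=
  Equiv.piCongrLeft_apply_apply _ _ _ _

/-- The derived functor `∂_{H,h} : ∂_{L₀}𝓛 ⥤ ∂_{M₀}𝓜` of a discrete opfibration
`H : 𝓛 ⥤ 𝓜` together with a family of functions `h_K : L₀ K → M₀ (H K)`: it sends
`(K, α)` to `(H K, β)` where `β F := h (α (H⁻¹ F))`, using the inverse of the fanout
bijection of `H` at rank `0`, and sends `(f, φ)` to `(H f, ψ)`. -/
noncomputable def derivedFunctor (H : C ⥤ D) {rkC : C → ℕ} {rkD : D → ℕ}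
    (hH : IsDiscOpfib H rkC rkD)
    (L₀ : RankObj rkC 0 → Type w) (M₀ : RankObj rkD 0 → Type w)
    (h : ∀ K : RankObj rkC 0, L₀ K → M₀ ⟨H.obj K.1, (hH.pres K.1).trans K.2⟩) :
    DerivObj rkC L₀ ⥤ DerivObj rkD M₀ where
  obj A :=
    { pt := H.obj A.pt
      pos := by rw [hH.pres]; exact A.pos
      sec := derivedSec H hH L₀ M₀ h A }
  map {A B} f := ⟨H.map f.1, by
    intro F
    obtain ⟨G, rfl⟩ := (fanoutEquiv H hH B.pt 0 B.pos).surjective F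
    have key : (⟨(fanoutEquiv H hH B.pt 0 B.pos G).1,
          H.map f.1 ≫ (fanoutEquiv H hH B.pt 0 B.pos G).2⟩ : Fanout rkD (H.obj A.pt) 0)
        = fanoutEquiv H hH A.pt 0 A.pos ⟨G.1, f.1 ≫ G.2⟩ := by
      show (⟨⟨H.obj G.1.1, (hH.pres G.1.1).trans G.1.2⟩, H.map f.1 ≫ H.map G.2⟩ :
          Fanout rkD (H.obj A.pt) 0) = ⟨⟨H.obj G.1.1, (hH.pres G.1.1).trans G.1.2⟩,
          H.map (f.1 ≫ G.2)⟩
      rw [H.map_comp]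
    have h1 := secHEq (derivedSec H hH L₀ M₀ h A) key
    have h2 := derivedSec_apply H hH L₀ M₀ h A ⟨G.1, f.1 ≫ G.2⟩
    have h3 := derivedSec_apply H hH L₀ M₀ h B G
    have h4 : h G.1 (A.sec ⟨G.1, f.1 ≫ G.2⟩) = h G.1 (B.sec G) := congrArg (h G.1) (f.2 G)
    exact eq_of_heq (h1.trans (heq_of_eq (h2.trans (h4.trans h3.symm))))⟩
  map_id A := Subtype.ext (H.map_id A.pt)
  map_comp f g := Subtype.ext (H.map_comp f.1 g.1)

end

/-! A morphism `f : K ⟶ L` of `𝓛` underlies exactly one morphism out of `(K, α)`, because the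
compatibility condition forces the section at `L` to be `α` precomposed with `f`. Hence the fanout
of `(K, α)` at `m` is the fanout of `K` at `m + 1`, and under this identification the fanout map of
the derived functor at `m` is that of `H` at `m + 1`. -/

namespace DerivObj

variable {C : Type u} [Category.{v} C] {rk : C → ℕ} {M : RankObj rk 0 → Type w}

theorem derivRk_add_one (A : DerivObj rk M) : derivRk rk M A + 1 = rk A.pt :=
  Nat.sub_add_cancel A.pos

/-- The pushforward of `A = (K, α)` along `f : K ⟶ L`: the object `L` with the section
`(N, g) ↦ α (N, f ≫ g)`, the only one for which `f` is a morphism out of `A`. -/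
def pushforward (A : DerivObj rk M) {L : C} (hL : 0 < rk L) (f : A.pt ⟶ L) : DerivObj rk M where
  pt := L
  pos := hL
  sec F := A.sec ⟨F.1, f ≫ F.2⟩

/-- The morphism from `A` to its pushforward along `f` whose underlying morphism is `f`. -/
def toPushforward (A : DerivObj rk M) {L : C} (hL : 0 < rk L) (f : A.pt ⟶ L) :
    A ⟶ A.pushforward hL f :=
  ⟨f, fun _ => rfl⟩

/-- The fanout of `(K, α)` in the derivative is the fanout of `K` one rank higher: forgetting
sections is inverse to pushing `α` forward. -/
def fanoutEquivSucc (A : DerivObj rk M) (m : ℕ) :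
    Fanout (derivRk rk M) A m ≃ Fanout rk A.pt (m + 1) where
  toFun G := ⟨⟨G.1.1.pt, G.1.1.derivRk_add_one.symm.trans (congrArg (· + 1) G.1.2)⟩, G.2.1⟩
  invFun G :=
    have rk_pos : 0 < rk G.1.1 := m.succ_pos.trans_eq G.1.2.symm
    ⟨⟨A.pushforward rk_pos G.2, congrArg (· - 1) G.1.2⟩, A.toPushforward rk_pos G.2⟩
  left_inv := by
    rintro ⟨⟨⟨L, hL, β⟩, hm⟩, ⟨(f : A.pt ⟶ L), hf⟩⟩
    have sec_eq : (A.pushforward hL f).sec = β := funext hf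
    subst sec_eq
    rfl
  right_inv _ := rfl

end DerivObj

section

variable {C : Type u} [Category.{v} C] {D : Type u₂} [Category.{v₂} D] (H : C ⥤ D)
  {rkC : C → ℕ} {rkD : D → ℕ} (hH : IsDiscOpfib H rkC rkD)
  (L₀ : RankObj rkC 0 → Type w) (M₀ : RankObj rkD 0 → Type w)
  (h : ∀ K : RankObj rkC 0, L₀ K → M₀ ⟨H.obj K.1, (hH.pres K.1).trans K.2⟩)

theorem derivedFunctor_rankPres :
    RankPres (derivedFunctor H hH L₀ M₀ h) (derivRk rkC L₀) (derivRk rkD M₀) :=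
  fun A => congrArg (· - 1) (hH.pres A.pt)

theorem fanoutEquivSucc_comp_fanoutMap_derivedFunctor (A : DerivObj rkC L₀) (m : ℕ) :
    ((derivedFunctor H hH L₀ M₀ h).obj A).fanoutEquivSucc m ∘
        fanoutMap (derivedFunctor H hH L₀ M₀ h) (derivedFunctor_rankPres H hH L₀ M₀ h) A m =
      fanoutMap H hH.pres A.pt (m + 1) ∘ A.fanoutEquivSucc m :=
  rfl

theorem bijective_fanoutMap_derivedFunctor_iff (A : DerivObj rkC L₀) (m : ℕ) :
    Function.Bijective
        (fanoutMap (derivedFunctor H hH L₀ M₀ h) (derivedFunctor_rankPres H hH L₀ M₀ h) A m) ↔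
      Function.Bijective (fanoutMap H hH.pres A.pt (m + 1)) :=
  calc
    _ ↔ Function.Bijective (((derivedFunctor H hH L₀ M₀ h).obj A).fanoutEquivSucc m ∘
          fanoutMap (derivedFunctor H hH L₀ M₀ h) (derivedFunctor_rankPres H hH L₀ M₀ h) A m) :=
      (EquivLike.comp_bijective _ _).symm
    _ ↔ Function.Bijective (fanoutMap H hH.pres A.pt (m + 1) ∘ A.fanoutEquivSucc m) :=
      iff_of_eq <| congrArg Function.Bijective <|
        fanoutEquivSucc_comp_fanoutMap_derivedFunctor H hH L₀ M₀ h A m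
    _ ↔ _ := EquivLike.bijective_comp _ _

theorem derivedFunctor_isDiscOpfib_general :
    IsDiscOpfib (derivedFunctor H hH L₀ M₀ h) (derivRk rkC L₀) (derivRk rkD M₀) where
  pres := derivedFunctor_rankPres H hH L₀ M₀ h
  bij A m hm :=
    (bijective_fanoutMap_derivedFunctor_iff H hH L₀ M₀ h A m).2 <|
      hH.bij A.pt (m + 1) (Nat.add_lt_of_lt_sub hm)

end

/-- Let `H : 𝓛 ⥤ 𝓜` be a discrete opfibration between inverse
categories of height `p > 0`, `L₀` and `M₀` families of types indexed by the rank-0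
objects, and `h` a family of functions `h_K : L₀ K → M₀ (H K)`.  Then the derived
functor `∂_{H,h} : ∂_{L₀}𝓛 ⥤ ∂_{M₀}𝓜` (which is well defined: see `derivedFunctor`)
is a discrete opfibration (for the rank functions `rk (K, α) = rk K - 1`). -/
theorem derivedFunctor_isDiscOpfib {C : Type u} [Category.{v} C] {D : Type u₂}
    [Category.{v₂} D] (r : InverseRank C) (s : InverseRank D) (p : ℕ) (hp : 0 < p)
    (hhr : r.HasHeight p) (hhs : s.HasHeight p) (H : C ⥤ D)
    (hH : IsDiscOpfib H r.rk s.rk)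
    (L₀ : RankObj r.rk 0 → Type w) (M₀ : RankObj s.rk 0 → Type w)
    (h : ∀ K : RankObj r.rk 0, L₀ K → M₀ ⟨H.obj K.1, (hH.pres K.1).trans K.2⟩) :
    IsDiscOpfib (derivedFunctor H hH L₀ M₀ h) (derivRk r.rk L₀) (derivRk s.rk M₀) :=
  derivedFunctor_isDiscOpfib_general H hH L₀ M₀ h
end

section
/- Derivation of inverse categories is functorial: (1) for an inverse category 𝓛 of height p > 0 and a family L₀ of types indexed by 𝓛(0), the derived functor ∂_{1_𝓛, (λ K x, x)} equals the identity functor of ∂_{L₀}𝓛; and (2) for discrete opfibrations H : 𝓛 ⥤ 𝓜 and I : 𝓜 ⥤ 𝓝 between inverse categories of height p > 0, families L₀, M₀, N₀ indexed by the rank-0 objects, and function families h_K : L₀ K → M₀(H K) and i_J : M₀ J → N₀(I J), one has ∂_{I,i} ∘ ∂_{H,h} = ∂_{I ∘ H, i ∘ h} as functors ∂_{L₀}𝓛 ⥤ ∂_{N₀}𝓝, where (i ∘ h)_K := i_{H K} ∘ h_K. -/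
open CategoryTheory

universe w v u v₂ u₂ v₃ u₃

/-! The derived functor of `H` lies over `H` along the forgetful functor `∂_M 𝓛 ⥤ 𝓛`. This
forgetful functor is faithful, so two functors into a derivative that lie over the same functor are
equal as soon as they agree on objects, that is, on sections. A section over the fanout of `H K` is
in turn determined by its values at the image of the fanout of `K`, where the section of `∂_{H,h}`
is given by applying `h`. -/

theorem functor_ext_of_comp_faithful {C : Type u} [Category.{v} C] {D : Type u₂} [Category.{v₂} D]
    {E : Type u₃} [Category.{v₃} E] (P : D ⥤ E) [P.Faithful] {F G : C ⥤ D}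
    (hobj : ∀ X, F.obj X = G.obj X) (hcomp : F ⋙ P = G ⋙ P) : F = G := by
  refine CategoryTheory.Functor.ext hobj fun X Y f => P.map_injective ?_
  simpa only [Functor.comp_map, Functor.map_comp, eqToHom_map] using Functor.congr_hom hcomp f

section

variable {C : Type u} [Category.{v} C] (rk : C → ℕ) (M : RankObj rk 0 → Type w)

/-- The forgetful functor `∂_M 𝓛 ⥤ 𝓛`, sending `(K, α)` to `K`. Derived functors are compared by
comparing their composites with it. -/
def DerivObj.forget : DerivObj rk M ⥤ C where
  obj A := A.pt
  map f := f.1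

instance DerivObj.forget_faithful : (DerivObj.forget rk M).Faithful where
  map_injective := Subtype.ext

end

section

variable {C : Type u} [Category.{v} C] {D : Type u₂} [Category.{v₂} D]
  {E : Type u₃} [Category.{v₃} E] {rkC : C → ℕ} {rkD : D → ℕ} {rkE : E → ℕ}
  {H : C ⥤ D} (hH : IsDiscOpfib H rkC rkD) {I : D ⥤ E} (hI : IsDiscOpfib I rkD rkE)
  (L₀ : RankObj rkC 0 → Type w) (M₀ : RankObj rkD 0 → Type w) (N₀ : RankObj rkE 0 → Type w)
  (h : ∀ K : RankObj rkC 0, L₀ K → M₀ ⟨H.obj K.1, (hH.pres K.1).trans K.2⟩)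
  (i : ∀ J : RankObj rkD 0, M₀ J → N₀ ⟨I.obj J.1, (hI.pres J.1).trans J.2⟩)

theorem derivedFunctor_comp_forget :
    derivedFunctor H hH L₀ M₀ h ⋙ DerivObj.forget rkD M₀ = DerivObj.forget rkC L₀ ⋙ H :=
  rfl

theorem derivedSec_eq_of_apply_fanoutMap (A : DerivObj rkC L₀)
    {β : ∀ F : Fanout rkD (H.obj A.pt) 0, M₀ F.1}
    (hβ : ∀ G : Fanout rkC A.pt 0, β (fanoutMap H hH.pres A.pt 0 G) = h G.1 (A.sec G)) :
    derivedSec H hH L₀ M₀ h A = β := by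
  funext F
  obtain ⟨G, rfl⟩ := (fanoutEquiv H hH A.pt 0 A.pos).surjective F
  exact (derivedSec_apply H hH L₀ M₀ h A G).trans (hβ G).symm

theorem derivedSec_id (A : DerivObj rkC L₀) :
    derivedSec (𝟭 C) (isDiscOpfib_id rkC) L₀ L₀ (fun _ x => x) A = A.sec :=
  derivedSec_eq_of_apply_fanoutMap (isDiscOpfib_id rkC) L₀ L₀ (fun _ x => x) A fun _ => rfl

theorem derivedSec_comp (A : DerivObj rkC L₀) :
    derivedSec (H ⋙ I) (isDiscOpfib_comp hH hI) L₀ N₀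
        (fun K x => i ⟨H.obj K.1, (hH.pres K.1).trans K.2⟩ (h K x)) A
      = derivedSec I hI M₀ N₀ i ((derivedFunctor H hH L₀ M₀ h).obj A) := by
  refine derivedSec_eq_of_apply_fanoutMap (isDiscOpfib_comp hH hI) L₀ N₀ _ A fun G => ?_
  have outer := derivedSec_apply I hI M₀ N₀ i ((derivedFunctor H hH L₀ M₀ h).obj A)
    (fanoutEquiv H hH A.pt 0 A.pos G)
  have inner : derivedSec H hH L₀ M₀ h A (fanoutEquiv H hH A.pt 0 A.pos G) = h G.1 (A.sec G) :=
    derivedSec_apply H hH L₀ M₀ h A G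
  exact outer.trans (congrArg (i _) inner)

theorem derivedFunctor_id :
    derivedFunctor (𝟭 C) (isDiscOpfib_id rkC) L₀ L₀ (fun _ x => x) = 𝟭 (DerivObj rkC L₀) :=
  functor_ext_of_comp_faithful (DerivObj.forget rkC L₀)
    (fun A => congrArg (DerivObj.mk A.pt A.pos) (derivedSec_id L₀ A))
    (derivedFunctor_comp_forget (isDiscOpfib_id rkC) L₀ L₀ fun _ x => x)

theorem derivedFunctor_comp :
    derivedFunctor H hH L₀ M₀ h ⋙ derivedFunctor I hI M₀ N₀ i
      = derivedFunctor (H ⋙ I) (isDiscOpfib_comp hH hI) L₀ N₀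
          (fun K x => i ⟨H.obj K.1, (hH.pres K.1).trans K.2⟩ (h K x)) := by
  refine functor_ext_of_comp_faithful (DerivObj.forget rkE N₀)
    (fun A => congrArg (DerivObj.mk _ _) (derivedSec_comp hH hI L₀ M₀ N₀ h i A).symm) ?_
  calc
    _ = derivedFunctor H hH L₀ M₀ h ⋙ DerivObj.forget rkD M₀ ⋙ I :=
      congrArg (derivedFunctor H hH L₀ M₀ h ⋙ ·) (derivedFunctor_comp_forget hI M₀ N₀ i)
    _ = DerivObj.forget rkC L₀ ⋙ H ⋙ I :=
      congrArg (· ⋙ I) (derivedFunctor_comp_forget hH L₀ M₀ h)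
    _ = _ := (derivedFunctor_comp_forget (isDiscOpfib_comp hH hI) L₀ N₀ _).symm

theorem derivedFunctor_id_and_comp_general :
    (derivedFunctor (𝟭 C) (isDiscOpfib_id rkC) L₀ L₀ (fun _ x => x) = 𝟭 (DerivObj rkC L₀)) ∧
      (derivedFunctor H hH L₀ M₀ h ⋙ derivedFunctor I hI M₀ N₀ i
        = derivedFunctor (H ⋙ I) (isDiscOpfib_comp hH hI) L₀ N₀
            (fun K x => i ⟨H.obj K.1, (hH.pres K.1).trans K.2⟩ (h K x))) :=
  ⟨derivedFunctor_id L₀, derivedFunctor_comp hH hI L₀ M₀ N₀ h i⟩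

end

/-- Derivation of inverse categories is functorial:
(1) the derived functor of the identity (with the identity family of functions) is
the identity functor of `∂_{L₀}𝓛`; and
(2) for discrete opfibrations `H : 𝓛 ⥤ 𝓜` and `I : 𝓜 ⥤ 𝓝` and families of
functions `h`, `i`, one has `∂_{I,i} ∘ ∂_{H,h} = ∂_{I ∘ H, i ∘ h}` as functors
`∂_{L₀}𝓛 ⥤ ∂_{N₀}𝓝`, where `(i ∘ h)_K := i_{H K} ∘ h_K`. -/
theorem derivedFunctor_id_and_comp {C : Type u} [Category.{v} C] {D : Type u₂}
    [Category.{v₂} D] {E : Type u₃} [Category.{v₃} E]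
    (r : InverseRank C) (s : InverseRank D) (t : InverseRank E)
    (p : ℕ) (hp : 0 < p) (hhr : r.HasHeight p) (hhs : s.HasHeight p)
    (hht : t.HasHeight p)
    (H : C ⥤ D) (I : D ⥤ E) (hH : IsDiscOpfib H r.rk s.rk)
    (hI : IsDiscOpfib I s.rk t.rk)
    (L₀ : RankObj r.rk 0 → Type w) (M₀ : RankObj s.rk 0 → Type w)
    (N₀ : RankObj t.rk 0 → Type w)
    (h : ∀ K : RankObj r.rk 0, L₀ K → M₀ ⟨H.obj K.1, (hH.pres K.1).trans K.2⟩)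
    (i : ∀ J : RankObj s.rk 0, M₀ J → N₀ ⟨I.obj J.1, (hI.pres J.1).trans J.2⟩) :
    (derivedFunctor (𝟭 C) (isDiscOpfib_id r.rk) L₀ L₀ (fun _ x => x)
        = 𝟭 (DerivObj r.rk L₀)) ∧
      (derivedFunctor H hH L₀ M₀ h ⋙ derivedFunctor I hI M₀ N₀ i
        = derivedFunctor (H ⋙ I) (isDiscOpfib_comp hH hI) L₀ N₀
            (fun K x => i ⟨H.obj K.1, (hH.pres K.1).trans K.2⟩ (h K x))) := by
  exact derivedFunctor_id_and_comp_general hH hI L₀ M₀ N₀ h i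
end
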